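/- Let R > 0, R_μ > 0, L > 0 and ε ∈ (0,1), and let (f_ε, g_ε) be a nonnegative classical solution of the regularized thin-film Muskat system on (−L,L) with f_ε ≥ ε and g_ε ≥ ε on (0,∞)×(−L,L). Then for every T > 0: H(f_ε(T), g_ε(T)) + ∫₀^T∫_{−L}^{L} [(1/2)|∂ₓf_ε|² + (R/(1+2R))|∂ₓg_ε|²] dx dt ≤ H(f_ε(0), g_ε(0)), where H(f,g) := ∫_{−L}^{L} (f ln f + (R/R_μ) g ln g) dx. -/

import Mathlib

open MeasureTheory Set

noncomputable section

/-- Derivative within the interval `[-L, L]`. -/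
def derivI (L : ℝ) (u : ℝ → ℝ) (x : ℝ) : ℝ :=
  derivWithin u (Icc (-L) L) x

/-- `F = R_ε[u]`: `F ∈ H²((-L,L))` (here: `C²` on `[-L,L]`) solves
`F - ε² ∂ₓ²F = u` on `[-L,L]` with Neumann boundary conditions `∂ₓF(±L) = 0`. -/
structure IsResolvent (L ε : ℝ) (u F : ℝ → ℝ) : Prop where
  reg : ContDiffOn ℝ 2 F (Icc (-L) L)
  eqn : ∀ x ∈ Icc (-L) L, F x - ε ^ 2 * derivI L (derivI L F) x = u x
  bc_left : derivI L F (-L) = 0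
  bc_right : derivI L F L = 0

/-- A classical solution `(f, g)` of the regularized thin-film Muskat system (3.2a) on
`(-L, L)`, with `F = R_ε[f]` and `G = R_ε[g]`. -/
structure IsClassicalSolution (R Rμ L ε : ℝ) (f g F G : ℝ → ℝ → ℝ) : Prop where
  cont_f : ContinuousOn (Function.uncurry f) (Ici (0:ℝ) ×ˢ Icc (-L) L)
  cont_g : ContinuousOn (Function.uncurry g) (Ici (0:ℝ) ×ˢ Icc (-L) L)
  reg_f : ∀ t : ℝ, 0 < t → ContDiffOn ℝ 2 (f t) (Icc (-L) L)
  reg_g : ∀ t : ℝ, 0 < t → ContDiffOn ℝ 2 (g t) (Icc (-L) L)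
  res_f : ∀ t : ℝ, 0 < t → IsResolvent L ε (f t) (F t)
  res_g : ∀ t : ℝ, 0 < t → IsResolvent L ε (g t) (G t)
  bc_f : ∀ t : ℝ, 0 < t → derivI L (f t) (-L) = 0 ∧ derivI L (f t) L = 0
  bc_g : ∀ t : ℝ, 0 < t → derivI L (g t) (-L) = 0 ∧ derivI L (g t) L = 0
  pde_f : ∀ t : ℝ, 0 < t → ∀ x ∈ Ioo (-L) L,
    HasDerivAt (fun s => f s x)
      ((1 + R) * derivI L (fun y => f t y * derivI L (f t) y) x
        + R * derivI L (fun y => (f t y - ε) * derivI L (G t) y) x) t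
  pde_g : ∀ t : ℝ, 0 < t → ∀ x ∈ Ioo (-L) L,
    HasDerivAt (fun s => g s x)
      (Rμ * derivI L (fun y => (g t y - ε) * derivI L (F t) y) x
        + Rμ * derivI L (fun y => g t y * derivI L (g t) y) x) t

open Filter Function Topology

/-!
Testing each equation with `log u + 1` and integrating by parts, Young's inequality bounds the
cross terms, because the weights `(u - ε) / u` lie in `[-1, 1]` and
`‖∂ₓR_ε[v]‖₂ ≤ ‖∂ₓv‖₂`. This is the claimed inequality in differential form.

The time derivatives of `f` and `g` exist only pointwise in `x`, without any uniform bound, so the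
entropy cannot be differentiated under the integral directly. A comparison argument shows that
`|u t x - u t₀ x| ≤ M (t - t₀)` for `t ≥ t₀ > 0`, uniformly in `x`. Hence the entropy has a
right derivative at every positive time, and since it is continuous up to `t = 0` and
decreasing, its total drop bounds the time integral of the dissipation.
-/

section Calculus

theorem le_of_forall_le_add_mul {x y c : ℝ} (h : ∀ δ ∈ Ioc (0 : ℝ) 1, x ≤ y + δ * c) : x ≤ y := by
  have hlim : Tendsto (fun δ : ℝ => y + δ * c) (𝓝[>] 0) (𝓝 y) :=
    (Continuous.tendsto' (by fun_prop) 0 y (by simp)).mono_left nhdsWithin_le_nhds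
  exact ge_of_tendsto hlim (eventually_of_mem (Ioc_mem_nhdsGT one_pos) h)

theorem mul_sub_nonpos_of_isMaxOn {p : ℝ → ℝ} {s : Set ℝ} {p' x y : ℝ} (hs : Convex ℝ s)
    (hx : x ∈ s) (hy : y ∈ s) (hmax : IsMaxOn p s x) (hp : HasDerivWithinAt p p' s x) :
    (y - x) * p' ≤ 0 := by
  have hcone : y - x ∈ posTangentConeAt s x :=
    mem_posTangentConeAt_of_segment_subset (by simpa using hs.segment_subset hx hy)
  simpa using hmax.localize.hasFDerivWithinAt_nonpos hp.hasFDerivWithinAt hcone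

theorem deriv_deriv_nonpos_of_isLocalMax {p : ℝ → ℝ} {x : ℝ} (hmax : IsLocalMax p x)
    (hp : ContinuousAt p x) : deriv (deriv p) x ≤ 0 := by
  by_contra! hpos
  have hmin : IsLocalMin p x := isLocalMin_of_deriv_deriv_pos hpos hmax.deriv_eq_zero hp
  have hconst : p =ᶠ[𝓝 x] fun _ => p x := by
    filter_upwards [hmax, hmin] with y hle hge using le_antisymm hle hge
  simp [hconst.deriv.deriv_eq] at hpos

theorem integrableOn_Ioo_of_continuousOn_Icc {p : ℝ → ℝ} {a b : ℝ}
    (hp : ContinuousOn p (Icc a b)) : IntegrableOn p (Ioo a b) :=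
  hp.integrableOn_Icc.mono_set Ioo_subset_Icc_self

theorem setIntegral_Ioo_mono_of_continuousOn {p q : ℝ → ℝ} {a b : ℝ}
    (hp : ContinuousOn p (Icc a b)) (hq : ContinuousOn q (Icc a b))
    (hle : ∀ x ∈ Ioo a b, p x ≤ q x) : ∫ x in Ioo a b, p x ≤ ∫ x in Ioo a b, q x :=
  setIntegral_mono_on (integrableOn_Ioo_of_continuousOn_Icc hp)
    (integrableOn_Ioo_of_continuousOn_Icc hq) measurableSet_Ioo hle

theorem setIntegral_Ioo_const_mul_add_const_mul {p q : ℝ → ℝ} {a b : ℝ} (c d : ℝ)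
    (hp : ContinuousOn p (Icc a b)) (hq : ContinuousOn q (Icc a b)) :
    ∫ x in Ioo a b, (c * p x + d * q x)
      = c * (∫ x in Ioo a b, p x) + d * ∫ x in Ioo a b, q x := by
  rw [integral_add ((integrableOn_Ioo_of_continuousOn_Icc hp).const_mul c)
    ((integrableOn_Ioo_of_continuousOn_Icc hq).const_mul d), integral_const_mul,
    integral_const_mul]

theorem setIntegral_Ioo_mul_deriv_eq_neg {p p' q q' : ℝ → ℝ} {a b : ℝ} (hab : a ≤ b)
    (hp : ContinuousOn p (Icc a b)) (hp' : ContinuousOn p' (Icc a b))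
    (hq : ContinuousOn q (Icc a b)) (hq' : ContinuousOn q' (Icc a b))
    (hpd : ∀ x ∈ Ioo a b, HasDerivAt p (p' x) x) (hqd : ∀ x ∈ Ioo a b, HasDerivAt q (q' x) x)
    (ha : q a = 0) (hb : q b = 0) :
    ∫ x in Ioo a b, p x * q' x = -∫ x in Ioo a b, p' x * q x := by
  have hparts := intervalIntegral.integral_mul_deriv_eq_deriv_mul_of_hasDerivAt
    (u := p) (v := q) (by rwa [uIcc_of_le hab]) (by rwa [uIcc_of_le hab])
    (by rwa [min_eq_left hab, max_eq_right hab]) (by rwa [min_eq_left hab, max_eq_right hab])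
    (hp'.intervalIntegrable_of_Icc hab) (hq'.intervalIntegrable_of_Icc hab)
  simpa only [intervalIntegral.integral_of_le hab, integral_Ioc_eq_integral_Ioo, ha, hb, mul_zero,
    sub_zero, zero_sub] using hparts

theorem hasDerivWithinAt_integral_of_dominated_of_norm_sub_le {α E : Type*} [MeasurableSpace α]
    {μ : Measure α} [NormedAddCommGroup E] [NormedSpace ℝ E] {w : ℝ → α → E} {w' : α → E}
    {bound : α → ℝ} {s : Set ℝ} {t₀ : ℝ} (hint₀ : Integrable (w t₀) μ)
    (hint : ∀ᶠ t in 𝓝[s \ {t₀}] t₀, Integrable (w t) μ) (hbound : Integrable bound μ)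
    (hlip : ∀ᶠ t in 𝓝[s \ {t₀}] t₀, ∀ᵐ x ∂μ, ‖w t x - w t₀ x‖ ≤ bound x * |t - t₀|)
    (hderiv : ∀ᵐ x ∂μ, HasDerivWithinAt (fun t => w t x) (w' x) s t₀) :
    HasDerivWithinAt (fun t => ∫ x, w t x ∂μ) (∫ x, w' x ∂μ) s t₀ := by
  rw [hasDerivWithinAt_iff_tendsto_slope]
  have hslope : ∀ᶠ t in 𝓝[s \ {t₀}] t₀,
      ∫ x, slope (fun t => w t x) t₀ t ∂μ = slope (fun t => ∫ x, w t x ∂μ) t₀ t := by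
    filter_upwards [hint] with t ht
    simp only [slope_def_module]
    rw [integral_smul, integral_sub ht hint₀]
  refine Tendsto.congr' hslope (tendsto_integral_filter_of_dominated_convergence bound ?_ ?_
    hbound (hderiv.mono fun x hx => hasDerivWithinAt_iff_tendsto_slope.1 hx))
  · filter_upwards [hint] with t ht
    simp only [slope_def_module]
    exact ((ht.sub hint₀).smul _).aestronglyMeasurable
  · filter_upwards [hlip, self_mem_nhdsWithin] with t ht hne
    filter_upwards [ht] with x hx
    have hpos : 0 < |t - t₀| := abs_pos.2 (sub_ne_zero.2 hne.2)
    rw [slope_def_module, norm_smul, norm_inv, Real.norm_eq_abs, inv_mul_le_iff₀ hpos]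
    linarith

theorem exists_abs_mul_log_sub_le {m K : ℝ} (hm : 0 < m) :
    ∃ C, 0 ≤ C ∧ ∀ x ∈ Icc m K, ∀ y ∈ Icc m K,
      |y * Real.log y - x * Real.log x| ≤ C * |y - x| := by
  have hsmooth : ContDiffOn ℝ 1 (fun x => x * Real.log x) (Icc m K) :=
    contDiffOn_id.mul (contDiffOn_id.log fun x hx => (hm.trans_le hx.1).ne')
  obtain ⟨C, hC⟩ := hsmooth.exists_lipschitzOnWith one_ne_zero (convex_Icc m K) isCompact_Icc
  exact ⟨C, C.coe_nonneg, fun x hx y hy => hC.dist_le_mul y hy x hx⟩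

theorem integrableOn_and_add_integral_le_of_hasDeriv_right {E D : ℝ → ℝ} {a b : ℝ} (hab : a ≤ b)
    (hE : ContinuousOn E (Icc a b)) (hD : AEStronglyMeasurable D (volume.restrict (Ioc a b)))
    (hD₀ : ∀ t, 0 ≤ D t)
    (hderiv : ∀ t ∈ Ioo a b, ∃ e, HasDerivWithinAt E e (Ioi t) t ∧ e ≤ -D t) :
    IntegrableOn D (Ioc a b) ∧ E b + ∫ t in Ioc a b, D t ≤ E a := by
  choose! E' hE' hle using hderiv
  have hE'int : IntegrableOn (fun t => -E' t) (Ioc a b) :=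
    intervalIntegral.integrableOn_deriv_right_of_nonneg hE.fun_neg (fun t ht => (hE' t ht).fun_neg)
      fun t ht => by linarith [hle t ht, hD₀ t]
  have hint : IntegrableOn D (Ioc a b) := by
    refine hE'int.mono' hD ?_
    rw [← restrict_Ioo_eq_restrict_Ioc]
    filter_upwards [ae_restrict_mem measurableSet_Ioo] with t ht
    rw [Real.norm_of_nonneg (hD₀ t)]
    linarith [hle t ht]
  have hdrop := intervalIntegral.sub_le_integral_of_hasDeriv_right_of_le hab hE hE'
    ((integrableOn_Icc_iff_integrableOn_Ioc).2 hint).neg hle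
  simp only [Pi.neg_apply, integral_neg, intervalIntegral.integral_of_le hab] at hdrop
  exact ⟨hint, by linarith⟩

end Calculus

section Neumann

variable {L : ℝ} {u w : ℝ → ℝ} {x : ℝ}

theorem derivI_neg : derivI L (fun x => -u x) = fun x => -derivI L u x :=
  funext fun _ => derivWithin.fun_neg

/-- `C²` functions on `[-L, L]` with homogeneous Neumann boundary conditions: the spatial
regularity class of both the components of a solution and their resolvents. -/
structure IsNeumann (L : ℝ) (u : ℝ → ℝ) : Prop where
  contDiffOn : ContDiffOn ℝ 2 u (Icc (-L) L)
  derivI_left : derivI L u (-L) = 0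
  derivI_right : derivI L u L = 0

namespace IsNeumann

theorem continuousOn (hu : IsNeumann L u) : ContinuousOn u (Icc (-L) L) :=
  hu.contDiffOn.continuousOn

theorem hasDerivWithinAt (hu : IsNeumann L u) (hx : x ∈ Icc (-L) L) :
    HasDerivWithinAt u (derivI L u x) (Icc (-L) L) x :=
  (hu.contDiffOn.differentiableOn two_ne_zero x hx).hasDerivWithinAt

theorem hasDerivAt (hu : IsNeumann L u) (hx : x ∈ Ioo (-L) L) : HasDerivAt u (derivI L u x) x :=
  (hu.hasDerivWithinAt (Ioo_subset_Icc_self hx)).hasDerivAt (Icc_mem_nhds hx.1 hx.2)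

theorem contDiffOn_derivI (hL : 0 < L) (hu : IsNeumann L u) :
    ContDiffOn ℝ 1 (derivI L u) (Icc (-L) L) :=
  hu.contDiffOn.derivWithin (uniqueDiffOn_Icc (by linarith)) (by norm_num)

theorem continuousOn_derivI (hL : 0 < L) (hu : IsNeumann L u) :
    ContinuousOn (derivI L u) (Icc (-L) L) :=
  (hu.contDiffOn_derivI hL).continuousOn

theorem continuousOn_derivI_derivI (hL : 0 < L) (hu : IsNeumann L u) :
    ContinuousOn (derivI L (derivI L u)) (Icc (-L) L) :=
  (hu.contDiffOn_derivI hL).continuousOn_derivWithin (uniqueDiffOn_Icc (by linarith)) le_rfl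

theorem hasDerivWithinAt_derivI (hL : 0 < L) (hu : IsNeumann L u) (hx : x ∈ Icc (-L) L) :
    HasDerivWithinAt (derivI L u) (derivI L (derivI L u) x) (Icc (-L) L) x :=
  ((hu.contDiffOn_derivI hL).differentiableOn one_ne_zero x hx).hasDerivWithinAt

theorem hasDerivAt_derivI (hu : IsNeumann L u) (hx : x ∈ Ioo (-L) L) :
    HasDerivAt (derivI L u) (derivI L (derivI L u) x) x :=
  (hu.hasDerivWithinAt_derivI (by linarith [hx.1, hx.2]) (Ioo_subset_Icc_self hx)).hasDerivAt
    (Icc_mem_nhds hx.1 hx.2)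

theorem neg (hu : IsNeumann L u) : IsNeumann L (fun x => -u x) where
  contDiffOn := hu.contDiffOn.neg
  derivI_left := by simp [derivI_neg, hu.derivI_left]
  derivI_right := by simp [derivI_neg, hu.derivI_right]

theorem derivI_sub (hL : 0 < L) (hu : IsNeumann L u) (hw : IsNeumann L w) (hx : x ∈ Icc (-L) L) :
    derivI L (fun y => u y - w y) x = derivI L u x - derivI L w x :=
  ((hu.hasDerivWithinAt hx).sub (hw.hasDerivWithinAt hx)).derivWithin
    (uniqueDiffOn_Icc (by linarith) x hx)

theorem derivI_derivI_sub (hL : 0 < L) (hu : IsNeumann L u) (hw : IsNeumann L w)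
    (hx : x ∈ Icc (-L) L) :
    derivI L (derivI L fun y => u y - w y) x
      = derivI L (derivI L u) x - derivI L (derivI L w) x := by
  have hfirst : EqOn (derivI L fun y => u y - w y) (fun y => derivI L u y - derivI L w y)
      (Icc (-L) L) := fun y hy => hu.derivI_sub hL hw hy
  exact (derivWithin_congr hfirst (hfirst hx)).trans
    (((hu.hasDerivWithinAt_derivI hL hx).sub (hw.hasDerivWithinAt_derivI hL hx)).derivWithin
      (uniqueDiffOn_Icc (by linarith) x hx))

theorem sub (hL : 0 < L) (hu : IsNeumann L u) (hw : IsNeumann L w) :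
    IsNeumann L (fun x => u x - w x) where
  contDiffOn := hu.contDiffOn.sub hw.contDiffOn
  derivI_left := by
    rw [hu.derivI_sub hL hw (by simp [hL.le]), hu.derivI_left, hw.derivI_left, sub_zero]
  derivI_right := by
    rw [hu.derivI_sub hL hw (by simp [hL.le]), hu.derivI_right, hw.derivI_right, sub_zero]

-- The parabola `δ y²` has strictly outward slope at `±L`, which the Neumann conditions forbid at
-- a boundary maximum.
theorem mem_Ioo_of_isMaxOn_sub_mul_sq (hL : 0 < L) (hu : IsNeumann L u) {δ : ℝ} (hδ : 0 < δ)
    (hx : x ∈ Icc (-L) L) (hmax : IsMaxOn (fun y => u y - δ * y ^ 2) (Icc (-L) L) x) :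
    x ∈ Ioo (-L) L := by
  have hderiv : HasDerivWithinAt (fun y => u y - δ * y ^ 2) (derivI L u x - δ * (2 * x))
      (Icc (-L) L) x := by
    simpa using (hu.hasDerivWithinAt hx).fun_sub
      ((hasDerivAt_pow 2 x).const_mul δ).hasDerivWithinAt
  have hfermat (y : ℝ) (hy : y ∈ Icc (-L) L) : (y - x) * (derivI L u x - δ * (2 * x)) ≤ 0 :=
    mul_sub_nonpos_of_isMaxOn (convex_Icc _ _) hx hy hmax hderiv
  have hpos : 0 < δ * L ^ 2 := by positivity
  refine ⟨lt_of_le_of_ne hx.1 ?_, lt_of_le_of_ne hx.2 ?_⟩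
  · rintro rfl
    have := hfermat L ⟨by linarith, le_rfl⟩
    rw [hu.derivI_left] at this
    linarith
  · rintro rfl
    have := hfermat (-x) ⟨le_rfl, by linarith⟩
    rw [hu.derivI_right] at this
    linarith

theorem derivI_of_isLocalMax_sub_mul_sq (hu : IsNeumann L u) {δ : ℝ} (hx : x ∈ Ioo (-L) L)
    (hmax : IsLocalMax (fun y => u y - δ * y ^ 2) x) :
    derivI L u x = 2 * δ * x ∧ derivI L (derivI L u) x ≤ 2 * δ := by
  have hfirst (y : ℝ) (hy : y ∈ Ioo (-L) L) :
      HasDerivAt (fun y => u y - δ * y ^ 2) (derivI L u y - 2 * δ * y) y :=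
    ((hu.hasDerivAt hy).fun_sub ((hasDerivAt_pow 2 y).const_mul δ)).congr_deriv
      (by norm_num; ring)
  have hsecond : HasDerivAt (fun y => derivI L u y - 2 * δ * y)
      (derivI L (derivI L u) x - 2 * δ) x := by
    simpa using (hu.hasDerivAt_derivI hx).fun_sub ((hasDerivAt_id x).const_mul (2 * δ))
  have hderiv : deriv (fun y => u y - δ * y ^ 2) =ᶠ[𝓝 x] fun y => derivI L u y - 2 * δ * y :=
    eventually_of_mem (Ioo_mem_nhds hx.1 hx.2) fun y hy => (hfirst y hy).deriv
  have hnonpos := deriv_deriv_nonpos_of_isLocalMax hmax (hfirst x hx).continuousAt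
  rw [hderiv.deriv_eq, hsecond.deriv] at hnonpos
  exact ⟨sub_eq_zero.1 (hmax.hasDerivAt_eq_zero (hfirst x hx)), sub_nonpos.1 hnonpos⟩

end IsNeumann

end Neumann

section Energy

variable {L : ℝ}

/-- The entropy `∫ u ln u` of a single component, with the convention `0 ln 0 = 0`. -/
def boltzmannEntropy (L : ℝ) (u : ℝ → ℝ) : ℝ :=
  ∫ x in Ioo (-L) L, u x * Real.log (u x)

/-- The energy `∫ |∂ₓu|²`, in which the entropy dissipation is measured. -/
def dirichletEnergy (L : ℝ) (u : ℝ → ℝ) : ℝ :=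
  ∫ x in Ioo (-L) L, derivI L u x ^ 2

theorem dirichletEnergy_nonneg (L : ℝ) (u : ℝ → ℝ) : 0 ≤ dirichletEnergy L u :=
  integral_nonneg fun _ => sq_nonneg _

theorem setIntegral_const_mul_derivI_sq_add (hL : 0 < L) {u w : ℝ → ℝ} (hu : IsNeumann L u)
    (hw : IsNeumann L w) (c d : ℝ) :
    ∫ x in Ioo (-L) L, (c * derivI L u x ^ 2 + d * derivI L w x ^ 2)
      = c * dirichletEnergy L u + d * dirichletEnergy L w :=
  setIntegral_Ioo_const_mul_add_const_mul c d ((hu.continuousOn_derivI hL).pow 2)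
    ((hw.continuousOn_derivI hL).pow 2)

theorem exists_continuous_extension_of_continuousOn_Ici_prod_Icc (hL : 0 ≤ L) {u : ℝ → ℝ → ℝ}
    (hu : ContinuousOn (uncurry u) (Ici (0 : ℝ) ×ˢ Icc (-L) L)) :
    ∃ v : ℝ → ℝ → ℝ, Continuous (uncurry v) ∧ ∀ t, 0 ≤ t → EqOn (v t) (u t) (Icc (-L) L) := by
  have hLL : -L ≤ L := by linarith
  refine ⟨fun t x => u (max 0 t) (projIcc (-L) L hLL x), ?_, fun t ht x hx => ?_⟩
  · exact hu.comp_continuous (f := fun p : ℝ × ℝ => (max 0 p.1, (projIcc (-L) L hLL p.2 : ℝ)))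
      (by fun_prop) fun p => ⟨mem_Ici.2 (le_max_left _ _), (projIcc (-L) L hLL p.2).2⟩
  · simp [max_eq_right ht, projIcc_of_mem hLL hx]

theorem continuousOn_boltzmannEntropy (hL : 0 ≤ L) {u : ℝ → ℝ → ℝ}
    (hu : ContinuousOn (uncurry u) (Ici (0 : ℝ) ×ˢ Icc (-L) L)) :
    ContinuousOn (fun t => boltzmannEntropy L (u t)) (Ici 0) := by
  obtain ⟨v, hv, hvu⟩ := exists_continuous_extension_of_continuousOn_Ici_prod_Icc hL hu
  have hcont : Continuous fun t => ∫ x in Icc (-L) L, v t x * Real.log (v t x) :=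
    continuous_parametric_integral_of_continuous (f := fun t x => v t x * Real.log (v t x))
      (Real.continuous_mul_log.comp hv) isCompact_Icc
  refine hcont.continuousOn.congr fun t ht => ?_
  simp only [integral_Icc_eq_integral_Ioo]
  exact setIntegral_congr_fun measurableSet_Ioo fun x hx => by
    simp only [hvu t ht (Ioo_subset_Icc_self hx)]

-- The dissipation is only given slice by slice; its measurability in time comes from realizing
-- `∂ₓu` as the parametric derivative of a jointly continuous function.
theorem aestronglyMeasurable_dirichletEnergy (hL : 0 ≤ L) {u : ℝ → ℝ → ℝ}
    (hu : ContinuousOn (uncurry u) (Ici (0 : ℝ) ×ˢ Icc (-L) L)) :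
    AEStronglyMeasurable (fun t => dirichletEnergy L (u t)) (volume.restrict (Ici 0)) := by
  obtain ⟨v, hv, hvu⟩ := exists_continuous_extension_of_continuousOn_Ici_prod_Icc hL hu
  have hmeas : StronglyMeasurable fun t => ∫ x in Ioo (-L) L, deriv (v t) x ^ 2 :=
    ((measurable_deriv_with_param hv).pow_const 2).stronglyMeasurable.integral_prod_right'
  refine hmeas.aestronglyMeasurable.congr ?_
  filter_upwards [ae_restrict_mem measurableSet_Ici] with t ht
  refine setIntegral_congr_fun measurableSet_Ioo fun x hx => ?_
  have hnhds : Icc (-L) L ∈ 𝓝 x := Icc_mem_nhds hx.1 hx.2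
  have hderiv : derivI L (u t) x = deriv (v t) x :=
    (derivWithin_of_mem_nhds hnhds).trans
      (((hvu t ht).symm.eventuallyEq_of_mem hnhds).deriv_eq)
  simp only [hderiv]

theorem hasDerivWithinAt_boltzmannEntropy {m M t₀ T : ℝ} {u : ℝ → ℝ → ℝ} {u' : ℝ → ℝ}
    (hm : 0 < m) (hT : t₀ < T) (hu : ContinuousOn (uncurry u) (Icc t₀ T ×ˢ Icc (-L) L))
    (hlow : ∀ t ∈ Icc t₀ T, ∀ x ∈ Icc (-L) L, m ≤ u t x)
    (hlip : ∀ t ∈ Icc t₀ T, ∀ x ∈ Icc (-L) L, |u t x - u t₀ x| ≤ M * (t - t₀))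
    (hderiv : ∀ x ∈ Ioo (-L) L, HasDerivAt (fun t => u t x) (u' x) t₀) :
    HasDerivWithinAt (fun t => boltzmannEntropy L (u t))
      (∫ x in Ioo (-L) L, (Real.log (u t₀ x) + 1) * u' x) (Ioi t₀) t₀ := by
  obtain ⟨K, hK⟩ := (isCompact_Icc.prod isCompact_Icc).exists_bound_of_continuousOn hu
  obtain ⟨C, hC₀, hC⟩ := exists_abs_mul_log_sub_le (K := K) hm
  have hrange (t : ℝ) (ht : t ∈ Icc t₀ T) (x : ℝ) (hx : x ∈ Ioo (-L) L) : u t x ∈ Icc m K :=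
    have hx' := Ioo_subset_Icc_self hx
    ⟨hlow t ht x hx', (le_abs_self _).trans (hK (t, x) ⟨ht, hx'⟩)⟩
  have hint (t : ℝ) (ht : t ∈ Icc t₀ T) :
      IntegrableOn (fun x => u t x * Real.log (u t x)) (Ioo (-L) L) :=
    integrableOn_Ioo_of_continuousOn_Icc (Real.continuous_mul_log.comp_continuousOn
      (hu.comp (f := fun x => (t, x)) (by fun_prop) fun x hx => ⟨ht, hx⟩))
  have ht₀ : t₀ ∈ Icc t₀ T := ⟨le_rfl, hT.le⟩
  have hright : ∀ᶠ t in 𝓝[Ioi t₀ \ {t₀}] t₀, t ∈ Ioc t₀ T := by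
    rw [sdiff_singleton_eq_self self_notMem_Ioi]
    exact Ioc_mem_nhdsGT hT
  refine hasDerivWithinAt_integral_of_dominated_of_norm_sub_le (bound := fun _ => C * M)
    (hint t₀ ht₀) (hright.mono fun t ht => hint t (Ioc_subset_Icc_self ht))
    (integrableOn_const (by simp)) ?_ ?_
  · filter_upwards [hright] with t ht
    filter_upwards [ae_restrict_mem measurableSet_Ioo] with x hx
    have ht' := Ioc_subset_Icc_self ht
    calc ‖u t x * Real.log (u t x) - u t₀ x * Real.log (u t₀ x)‖
        ≤ C * |u t x - u t₀ x| := hC _ (hrange t₀ ht₀ x hx) _ (hrange t ht' x hx)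
      _ ≤ C * (M * (t - t₀)) := by gcongr; exact hlip t ht' x (Ioo_subset_Icc_self hx)
      _ = C * M * |t - t₀| := by rw [abs_of_pos (sub_pos.2 ht.1), mul_assoc]
  · filter_upwards [ae_restrict_mem measurableSet_Ioo] with x hx
    have hne : u t₀ x ≠ 0 := (hm.trans_le (hrange t₀ ht₀ x hx).1).ne'
    exact ((Real.hasDerivAt_mul_log hne).comp t₀ (hderiv x hx)).hasDerivWithinAt

end Energy

namespace IsResolvent

variable {L ε K : ℝ} {u F : ℝ → ℝ} {x : ℝ}

theorem isNeumann (h : IsResolvent L ε u F) : IsNeumann L F :=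
  ⟨h.reg, h.bc_left, h.bc_right⟩

theorem neg (h : IsResolvent L ε u F) : IsResolvent L ε (fun x => -u x) (fun x => -F x) where
  reg := h.reg.neg
  eqn x hx := by
    rw [derivI_neg, derivI_neg, ← h.eqn x hx]
    ring
  bc_left := h.isNeumann.neg.derivI_left
  bc_right := h.isNeumann.neg.derivI_right

theorem le_of_forall_le (hL : 0 < L) (h : IsResolvent L ε u F)
    (hu : ∀ y ∈ Icc (-L) L, u y ≤ K) (hx : x ∈ Icc (-L) L) : F x ≤ K := by
  refine le_of_forall_le_add_mul (c := 2 * ε ^ 2 + L ^ 2) fun δ hδ => ?_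
  obtain ⟨z, hz, hmax⟩ := isCompact_Icc.exists_isMaxOn ⟨x, hx⟩
    (f := fun y => F y - δ * y ^ 2) (h.reg.continuousOn.sub (by fun_prop))
  have hzI := h.isNeumann.mem_Ioo_of_isMaxOn_sub_mul_sq hL hδ.1 hz hmax
  obtain ⟨-, hsecond⟩ := h.isNeumann.derivI_of_isLocalMax_sub_mul_sq hzI
    (hmax.isLocalMax (Icc_mem_nhds hzI.1 hzI.2))
  have hFz : F z ≤ K + δ * (2 * ε ^ 2) := by
    have := mul_le_mul_of_nonneg_left hsecond (sq_nonneg ε)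
    linarith [h.eqn z hz, hu z hz]
  have hFx : F x - δ * x ^ 2 ≤ F z - δ * z ^ 2 := hmax hx
  have hxL : δ * x ^ 2 ≤ δ * L ^ 2 := mul_le_mul_of_nonneg_left (sq_le_sq' hx.1 hx.2) hδ.1.le
  linarith [mul_nonneg hδ.1.le (sq_nonneg z)]

theorem abs_le_of_forall_abs_le (hL : 0 < L) (h : IsResolvent L ε u F)
    (hu : ∀ y ∈ Icc (-L) L, |u y| ≤ K) (hx : x ∈ Icc (-L) L) : |F x| ≤ K := by
  have hneg : -F x ≤ K :=
    h.neg.le_of_forall_le (x := x) hL (fun y hy => (abs_le'.1 (hu y hy)).2) hx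
  exact abs_le'.2 ⟨h.le_of_forall_le hL (fun y hy => (abs_le'.1 (hu y hy)).1) hx, hneg⟩

theorem abs_derivI_derivI_le (hL : 0 < L) (hε : ε ≠ 0) (h : IsResolvent L ε u F)
    (hu : ∀ y ∈ Icc (-L) L, |u y| ≤ K) (hx : x ∈ Icc (-L) L) :
    |derivI L (derivI L F) x| ≤ 2 * K / ε ^ 2 := by
  rw [le_div_iff₀' (by positivity)]
  calc ε ^ 2 * |derivI L (derivI L F) x|
      = |ε ^ 2 * derivI L (derivI L F) x| := by rw [abs_mul, abs_of_nonneg (sq_nonneg ε)]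
    _ = |F x - u x| := by rw [← h.eqn x hx, sub_sub_cancel]
    _ ≤ |F x| + |u x| := abs_sub _ _
    _ ≤ 2 * K := by linarith [h.abs_le_of_forall_abs_le hL hu hx, hu x hx]

theorem abs_derivI_le (hL : 0 < L) (hε : ε ≠ 0) (h : IsResolvent L ε u F)
    (hu : ∀ y ∈ Icc (-L) L, |u y| ≤ K) (hx : x ∈ Icc (-L) L) :
    |derivI L F x| ≤ 2 * K / ε ^ 2 * (2 * L) := by
  have hmvt := (convex_Icc (-L) L).norm_image_sub_le_of_norm_hasDerivWithin_le
    (fun y hy => h.isNeumann.hasDerivWithinAt_derivI hL hy)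
    (fun y hy => h.abs_derivI_derivI_le hL hε hu hy) (left_mem_Icc.2 (by linarith)) hx
  have hdist : ‖x - -L‖ ≤ 2 * L := abs_le.2 ⟨by linarith [hx.1], by linarith [hx.2]⟩
  have hK : 0 ≤ K := (abs_nonneg _).trans (hu x hx)
  rw [h.bc_left, sub_zero] at hmvt
  exact hmvt.trans (by gcongr)

theorem exists_abs_derivI_le {t₀ T : ℝ} {v V : ℝ → ℝ → ℝ} (hL : 0 < L) (hε : ε ≠ 0)
    (hv : ContinuousOn (uncurry v) (Icc t₀ T ×ˢ Icc (-L) L))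
    (hV : ∀ t ∈ Icc t₀ T, IsResolvent L ε (v t) (V t)) :
    ∃ B, ∀ t ∈ Icc t₀ T, ∀ x ∈ Icc (-L) L,
      |derivI L (V t) x| ≤ B ∧ |derivI L (derivI L (V t)) x| ≤ B := by
  obtain ⟨K, hK⟩ := (isCompact_Icc.prod isCompact_Icc).exists_bound_of_continuousOn hv
  refine ⟨max (2 * K / ε ^ 2 * (2 * L)) (2 * K / ε ^ 2), fun t ht x hx => ?_⟩
  have hvK (y : ℝ) (hy : y ∈ Icc (-L) L) : |v t y| ≤ K := hK (t, y) ⟨ht, hy⟩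
  exact ⟨le_max_of_le_left ((hV t ht).abs_derivI_le hL hε hvK hx),
    le_max_of_le_right ((hV t ht).abs_derivI_derivI_le hL hε hvK hx)⟩

-- Testing `F - ε² ∂ₓ²F = u` with `∂ₓ²F` gives `∫ |∂ₓF|² ≤ ∫ ∂ₓu ∂ₓF`.
theorem dirichletEnergy_le (hL : 0 < L) (h : IsResolvent L ε u F) (hu : IsNeumann L u) :
    dirichletEnergy L F ≤ dirichletEnergy L u := by
  have hF := h.isNeumann
  have cF := hF.continuousOn
  have cFx := hF.continuousOn_derivI hL
  have cFxx := hF.continuousOn_derivI_derivI hL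
  have cu := hu.continuousOn
  have cux := hu.continuousOn_derivI hL
  have hparts {w : ℝ → ℝ} (hw : IsNeumann L w) :
      ∫ x in Ioo (-L) L, w x * derivI L (derivI L F) x
        = -∫ x in Ioo (-L) L, derivI L w x * derivI L F x :=
    setIntegral_Ioo_mul_deriv_eq_neg (by linarith) hw.continuousOn (hw.continuousOn_derivI hL)
      cFx cFxx (fun x hx => hw.hasDerivAt hx) (fun x hx => hF.hasDerivAt_derivI hx)
      h.bc_left h.bc_right
  have htest : ∫ x in Ioo (-L) L, u x * derivI L (derivI L F) x
      ≤ ∫ x in Ioo (-L) L, F x * derivI L (derivI L F) x := by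
    refine setIntegral_Ioo_mono_of_continuousOn (cu.mul cFxx) (cF.mul cFxx) fun x hx => ?_
    rw [← h.eqn x (Ioo_subset_Icc_self hx)]
    linarith [mul_nonneg (sq_nonneg ε) (sq_nonneg (derivI L (derivI L F) x))]
  have hyoung : ∫ x in Ioo (-L) L, derivI L u x * derivI L F x
      ≤ 1 / 2 * dirichletEnergy L u + 1 / 2 * dirichletEnergy L F := by
    rw [← setIntegral_const_mul_derivI_sq_add hL hu hF]
    refine setIntegral_Ioo_mono_of_continuousOn (cux.mul cFx) (by fun_prop) fun x _ => ?_
    linarith [two_mul_le_add_sq (derivI L u x) (derivI L F x)]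
  have hself : ∫ x in Ioo (-L) L, derivI L F x * derivI L F x = dirichletEnergy L F := by
    simp only [dirichletEnergy, sq]
  linarith [hparts hu, hparts hF]

end IsResolvent

section Comparison

variable {L M t₀ T : ℝ} {w w' : ℝ → ℝ → ℝ}

theorem le_mul_sub_of_isNeumann (hL : 0 < L)
    (hw : ContinuousOn (uncurry w) (Icc t₀ T ×ˢ Icc (-L) L))
    (hN : ∀ t ∈ Ioc t₀ T, IsNeumann L (w t))
    (hderiv : ∀ t ∈ Ioc t₀ T, ∀ x ∈ Ioo (-L) L, HasDerivAt (fun s => w s x) (w' t x) t)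
    (h₀ : ∀ x ∈ Icc (-L) L, w t₀ x ≤ 0)
    (hM : ∀ t ∈ Ioc t₀ T, ∀ x ∈ Ioo (-L) L, |derivI L (w t) x| ≤ 2 * L →
      derivI L (derivI L (w t)) x ≤ 2 → w' t x < M)
    {t x : ℝ} (ht : t ∈ Icc t₀ T) (hx : x ∈ Icc (-L) L) : w t x ≤ M * (t - t₀) := by
  refine le_of_forall_le_add_mul (c := L ^ 2) fun δ hδ => ?_
  obtain ⟨⟨s, z⟩, ⟨hs, hz⟩, hmax⟩ := (isCompact_Icc.prod isCompact_Icc).exists_isMaxOn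
    ⟨(t, x), ht, hx⟩ (f := fun p : ℝ × ℝ => uncurry w p - δ * p.2 ^ 2 - M * (p.1 - t₀))
    ((hw.sub (by fun_prop)).sub (by fun_prop))
  have hle (r y : ℝ) (hr : r ∈ Icc t₀ T) (hy : y ∈ Icc (-L) L) :
      w r y - δ * y ^ 2 - M * (r - t₀) ≤ w s z - δ * z ^ 2 - M * (s - t₀) :=
    hmax (a := (r, y)) ⟨hr, hy⟩
  have hs₀ : s = t₀ := by
    by_contra hne
    have hs' : s ∈ Ioc t₀ T := ⟨lt_of_le_of_ne hs.1 (Ne.symm hne), hs.2⟩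
    have hspace : IsMaxOn (fun y => w s y - δ * y ^ 2) (Icc (-L) L) z :=
      fun y hy => by simpa using hle s y hs hy
    have htime : IsMaxOn (fun r => w r z - M * (r - t₀)) (Icc t₀ T) s :=
      fun r hr => by simp only [mem_ofPred_eq]; linarith [hle r z hr hz]
    have hzI := (hN s hs').mem_Ioo_of_isMaxOn_sub_mul_sq hL hδ.1 hz hspace
    obtain ⟨hfirst, hsecond⟩ := (hN s hs').derivI_of_isLocalMax_sub_mul_sq hzI
      (hspace.isLocalMax (Icc_mem_nhds hzI.1 hzI.2))
    have hslope : |derivI L (w s) z| ≤ 2 * L := by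
      rw [hfirst, abs_mul, abs_of_pos (by linarith [hδ.1])]
      nlinarith [hδ.1, hδ.2, abs_le.2 hz]
    have hdrop : HasDerivWithinAt (fun r => w r z - M * (r - t₀)) (w' s z - M) (Icc t₀ T) s := by
      simpa using ((hderiv s hs' z hzI).fun_sub
        (((hasDerivAt_id s).sub_const t₀).const_mul M)).hasDerivWithinAt
    have hfermat : (t₀ - s) * (w' s z - M) ≤ 0 :=
      mul_sub_nonpos_of_isMaxOn (convex_Icc _ _) hs ⟨le_rfl, hs.1.trans hs.2⟩ htime hdrop
    exact absurd hfermat (not_le.2 (mul_pos_of_neg_of_neg (sub_neg.2 hs'.1)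
      (sub_neg.2 (hM s hs' z hzI hslope (by linarith [hδ.2])))))
  have hfinal := hle t x ht hx
  rw [hs₀, sub_self, mul_zero, sub_zero] at hfinal
  have hxL : δ * x ^ 2 ≤ δ * L ^ 2 := mul_le_mul_of_nonneg_left (sq_le_sq' hx.1 hx.2) hδ.1.le
  linarith [h₀ z hz, mul_nonneg hδ.1.le (sq_nonneg z)]

theorem abs_le_mul_sub_of_isNeumann (hL : 0 < L)
    (hw : ContinuousOn (uncurry w) (Icc t₀ T ×ˢ Icc (-L) L))
    (hN : ∀ t ∈ Ioc t₀ T, IsNeumann L (w t))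
    (hderiv : ∀ t ∈ Ioc t₀ T, ∀ x ∈ Ioo (-L) L, HasDerivAt (fun s => w s x) (w' t x) t)
    (h₀ : ∀ x ∈ Icc (-L) L, w t₀ x = 0)
    (hM : ∀ t ∈ Ioc t₀ T, ∀ x ∈ Ioo (-L) L, |derivI L (w t) x| ≤ 2 * L →
      (derivI L (derivI L (w t)) x ≤ 2 → w' t x < M) ∧
        (-2 ≤ derivI L (derivI L (w t)) x → -M < w' t x))
    {t x : ℝ} (ht : t ∈ Icc t₀ T) (hx : x ∈ Icc (-L) L) : |w t x| ≤ M * (t - t₀) := by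
  refine abs_le'.2 ⟨le_mul_sub_of_isNeumann hL hw hN hderiv (fun y hy => (h₀ y hy).le)
    (fun s hs y hy hslope => (hM s hs y hy hslope).1) ht hx, ?_⟩
  refine le_mul_sub_of_isNeumann (w := fun t x => -w t x) (w' := fun t x => -w' t x) hL hw.neg
    (fun s hs => (hN s hs).neg) (fun s hs y hy => (hderiv s hs y hy).fun_neg)
    (fun y hy => by simp [h₀ y hy]) (fun s hs y hy hslope hsecond => ?_) ht hx
  simp only [derivI_neg, abs_neg] at hslope hsecond
  exact neg_lt.1 ((hM s hs y hy hslope).2 (neg_le.1 hsecond))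

end Comparison

section ThinFilm

variable {a b L ε : ℝ} {u V : ℝ → ℝ} {x : ℝ}

/-- The flux `a u ∂ₓu + b (u - ε) ∂ₓV` of a film of height `u` driven by the potential `V`. -/
def filmFlux (a b L ε : ℝ) (u V : ℝ → ℝ) (x : ℝ) : ℝ :=
  a * (u x * derivI L u x) + b * ((u x - ε) * derivI L V x)

/-- The right-hand side `a ∂ₓ(u ∂ₓu) + b ∂ₓ((u - ε) ∂ₓV)` of the thin-film equation, which is the
common form of the two equations of the Muskat system. -/
def filmVelocity (a b L ε : ℝ) (u V : ℝ → ℝ) (x : ℝ) : ℝ :=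
  a * derivI L (fun y => u y * derivI L u y) x + b * derivI L (fun y => (u y - ε) * derivI L V y) x

theorem IsNeumann.derivI_sub_mul_derivI (hL : 0 < L) (hu : IsNeumann L u)
    (hV : IsNeumann L V) (c : ℝ) (hx : x ∈ Icc (-L) L) :
    derivI L (fun y => (u y - c) * derivI L V y) x
      = derivI L u x * derivI L V x + (u x - c) * derivI L (derivI L V) x :=
  (((hu.hasDerivWithinAt hx).sub_const c).mul (hV.hasDerivWithinAt_derivI hL hx)).derivWithin
    (uniqueDiffOn_Icc (by linarith) x hx)

theorem filmVelocity_eq (hL : 0 < L) (hu : IsNeumann L u) (hV : IsNeumann L V)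
    (hx : x ∈ Icc (-L) L) :
    filmVelocity a b L ε u V x
      = a * (derivI L u x ^ 2 + u x * derivI L (derivI L u) x)
        + b * (derivI L u x * derivI L V x + (u x - ε) * derivI L (derivI L V) x) := by
  have hself := hu.derivI_sub_mul_derivI hL hu 0 hx
  simp only [sub_zero] at hself
  rw [filmVelocity, hself, hu.derivI_sub_mul_derivI hL hV ε hx, sq]

theorem hasDerivAt_filmFlux (hu : IsNeumann L u) (hV : IsNeumann L V) (hx : x ∈ Ioo (-L) L) :
    HasDerivAt (filmFlux a b L ε u V) (filmVelocity a b L ε u V x) x := by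
  have hL : 0 < L := by linarith [hx.1, hx.2]
  rw [filmVelocity_eq hL hu hV (Ioo_subset_Icc_self hx), sq]
  exact (((hu.hasDerivAt hx).mul (hu.hasDerivAt_derivI hx)).const_mul a).add
    ((((hu.hasDerivAt hx).sub_const ε).mul (hV.hasDerivAt_derivI hx)).const_mul b)

theorem continuousOn_filmFlux (hL : 0 < L) (hu : IsNeumann L u) (hV : IsNeumann L V) :
    ContinuousOn (filmFlux a b L ε u V) (Icc (-L) L) := by
  have cu := hu.continuousOn
  have cux := hu.continuousOn_derivI hL
  have cVx := hV.continuousOn_derivI hL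
  unfold filmFlux
  fun_prop

theorem continuousOn_filmVelocity (hL : 0 < L) (hu : IsNeumann L u) (hV : IsNeumann L V) :
    ContinuousOn (filmVelocity a b L ε u V) (Icc (-L) L) := by
  have cu := hu.continuousOn
  have cux := hu.continuousOn_derivI hL
  have cuxx := hu.continuousOn_derivI_derivI hL
  have cVx := hV.continuousOn_derivI hL
  have cVxx := hV.continuousOn_derivI_derivI hL
  refine ContinuousOn.congr (f := fun x => a * (derivI L u x ^ 2 + u x * derivI L (derivI L u) x)
    + b * (derivI L u x * derivI L V x + (u x - ε) * derivI L (derivI L V) x)) (by fun_prop)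
    fun x hx => filmVelocity_eq hL hu hV hx

theorem abs_filmVelocity_sub_le {K Q B : ℝ} (hL : 0 < L) (hu : IsNeumann L u)
    (hV : IsNeumann L V) (hx : x ∈ Icc (-L) L) (huK : |u x| ≤ K) (huQ : |derivI L u x| ≤ Q)
    (hVB : |derivI L V x| ≤ B) (hVB' : |derivI L (derivI L V) x| ≤ B) :
    |filmVelocity a b L ε u V x - a * (u x * derivI L (derivI L u) x)|
      ≤ |a| * Q ^ 2 + |b| * (Q * B + (K + |ε|) * B) := by
  have hQ : 0 ≤ Q := (abs_nonneg _).trans huQ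
  have hKε : 0 ≤ K + |ε| := add_nonneg ((abs_nonneg _).trans huK) (abs_nonneg ε)
  have huε : |u x - ε| ≤ K + |ε| := (abs_sub _ _).trans (by gcongr)
  rw [filmVelocity_eq hL hu hV hx]
  calc |a * (derivI L u x ^ 2 + u x * derivI L (derivI L u) x)
        + b * (derivI L u x * derivI L V x + (u x - ε) * derivI L (derivI L V) x)
        - a * (u x * derivI L (derivI L u) x)|
      = |a * derivI L u x ^ 2
        + b * (derivI L u x * derivI L V x + (u x - ε) * derivI L (derivI L V) x)| := by
        congr 1; ring
    _ ≤ |a| * |derivI L u x| ^ 2 + |b| * (|derivI L u x| * |derivI L V x|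
        + |u x - ε| * |derivI L (derivI L V) x|) := by
        refine (abs_add_le _ _).trans ?_
        rw [abs_mul, abs_mul, abs_pow, ← abs_mul (derivI L u x), ← abs_mul (u x - ε)]
        gcongr
        exact abs_add_le _ _
    _ ≤ |a| * Q ^ 2 + |b| * (Q * B + (K + |ε|) * B) := by gcongr

theorem filmVelocity_le_and_neg_le {K Q B c : ℝ} (hL : 0 < L) (ha : 0 ≤ a) (hc : 0 ≤ c)
    (hu : IsNeumann L u) (hV : IsNeumann L V) (hx : x ∈ Icc (-L) L) (hu₀ : 0 ≤ u x)
    (huK : u x ≤ K) (huQ : |derivI L u x| ≤ Q) (hVB : |derivI L V x| ≤ B)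
    (hVB' : |derivI L (derivI L V) x| ≤ B) :
    (derivI L (derivI L u) x ≤ c → filmVelocity a b L ε u V x
        ≤ |a| * Q ^ 2 + |b| * (Q * B + (K + |ε|) * B) + a * (K * c)) ∧
      (-c ≤ derivI L (derivI L u) x →
        -(|a| * Q ^ 2 + |b| * (Q * B + (K + |ε|) * B) + a * (K * c))
          ≤ filmVelocity a b L ε u V x) := by
  have hlower := abs_le.1 (abs_filmVelocity_sub_le (a := a) (b := b) (ε := ε) hL hu hV hx
    ((abs_of_nonneg hu₀).trans_le huK) huQ hVB hVB')
  have hdiffusion {d : ℝ} (hd : d ≤ c) : a * (u x * d) ≤ a * (K * c) :=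
    mul_le_mul_of_nonneg_left
      ((mul_le_mul_of_nonneg_left hd hu₀).trans (mul_le_mul_of_nonneg_right huK hc)) ha
  constructor <;> intro hsecond
  · linarith [hdiffusion hsecond, hlower.2]
  · linarith [hdiffusion (neg_le.1 hsecond), hlower.1]

-- The weight `(u - ε) / u` produced by testing with `log u + 1` is at most one in absolute value
-- exactly when `ε / 2 ≤ u`.
theorem neg_derivI_div_mul_filmFlux_le {α : ℝ} (hb : 0 ≤ b) (hε : 0 < ε) (hα : 0 < α)
    (hux : ε / 2 ≤ u x) :
    -(derivI L u x / u x * filmFlux a b L ε u V x)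
      ≤ -(a - b * α / 2) * derivI L u x ^ 2 + b * α⁻¹ / 2 * derivI L V x ^ 2 := by
  have hu₀ : 0 < u x := by linarith
  have hweight : |(u x - ε) / u x| ≤ 1 := by
    rw [abs_div, abs_of_pos hu₀, div_le_one hu₀, abs_le]
    constructor <;> linarith
  have hcross : -((u x - ε) / u x * (derivI L u x * derivI L V x))
      ≤ α / 2 * derivI L u x ^ 2 + α⁻¹ / 2 * derivI L V x ^ 2 := by
    have hyoung := two_mul_le_add_mul_sq (a := |derivI L u x|) (b := |derivI L V x|) hα
    rw [sq_abs, sq_abs] at hyoung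
    calc -((u x - ε) / u x * (derivI L u x * derivI L V x))
        ≤ |(u x - ε) / u x| * |derivI L u x * derivI L V x| := by
          rw [← abs_mul]; exact neg_le_abs _
      _ ≤ |derivI L u x| * |derivI L V x| := by
          rw [abs_mul (derivI L u x)]
          exact mul_le_of_le_one_left (by positivity) hweight
      _ ≤ α / 2 * derivI L u x ^ 2 + α⁻¹ / 2 * derivI L V x ^ 2 := by linarith
  have hflux : derivI L u x / u x * filmFlux a b L ε u V x = a * derivI L u x ^ 2
      + b * ((u x - ε) / u x * (derivI L u x * derivI L V x)) := by
    rw [filmFlux]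
    field_simp
  rw [hflux]
  linarith [mul_le_mul_of_nonneg_left hcross hb]

theorem setIntegral_log_add_one_mul_filmVelocity_le {α : ℝ} (hL : 0 < L) (hb : 0 ≤ b)
    (hε : 0 < ε) (hα : 0 < α) (hu : IsNeumann L u) (hV : IsNeumann L V)
    (hlow : ∀ x ∈ Icc (-L) L, ε / 2 ≤ u x) :
    ∫ x in Ioo (-L) L, (Real.log (u x) + 1) * filmVelocity a b L ε u V x
      ≤ -(a - b * α / 2) * dirichletEnergy L u + b * α⁻¹ / 2 * dirichletEnergy L V := by
  have hne (x : ℝ) (hx : x ∈ Icc (-L) L) : u x ≠ 0 := by linarith [hlow x hx]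
  have cu := hu.continuousOn
  have cux := hu.continuousOn_derivI hL
  have cVx := hV.continuousOn_derivI hL
  have cflux : ContinuousOn (filmFlux a b L ε u V) (Icc (-L) L) := continuousOn_filmFlux hL hu hV
  have clog' : ContinuousOn (fun x => derivI L u x / u x) (Icc (-L) L) := cux.div cu hne
  rw [setIntegral_Ioo_mul_deriv_eq_neg (by linarith) ((cu.log hne).fun_add continuousOn_const) clog'
      cflux (continuousOn_filmVelocity hL hu hV)
      (fun x hx => ((hu.hasDerivAt hx).log (hne x (Ioo_subset_Icc_self hx))).add_const 1)
      (fun x hx => hasDerivAt_filmFlux hu hV hx)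
      (by simp [filmFlux, hu.derivI_left, hV.derivI_left])
      (by simp [filmFlux, hu.derivI_right, hV.derivI_right]),
    ← integral_neg, ← setIntegral_const_mul_derivI_sq_add hL hu hV]
  exact setIntegral_Ioo_mono_of_continuousOn (clog'.mul cflux).neg (by fun_prop) fun x hx =>
    neg_derivI_div_mul_filmFlux_le hb hε hα (hlow x (Ioo_subset_Icc_self hx))

end ThinFilm

/-- One equation of the Muskat system: a film of height `u` with mobilities `a`, `b`, coupled to
the film `v` through the regularized pressure `V = R_ε[v]`. -/
structure IsThinFilmSolution (a b L ε : ℝ) (u v V : ℝ → ℝ → ℝ) : Prop where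
  continuousOn : ContinuousOn (uncurry u) (Ici (0 : ℝ) ×ˢ Icc (-L) L)
  continuousOn_source : ContinuousOn (uncurry v) (Ici (0 : ℝ) ×ˢ Icc (-L) L)
  isNeumann : ∀ t, 0 < t → IsNeumann L (u t)
  isNeumann_source : ∀ t, 0 < t → IsNeumann L (v t)
  isResolvent : ∀ t, 0 < t → IsResolvent L ε (v t) (V t)
  hasDerivAt : ∀ t, 0 < t → ∀ x ∈ Ioo (-L) L,
    HasDerivAt (fun s => u s x) (filmVelocity a b L ε (u t) (V t) x) t

namespace IsThinFilmSolution

variable {a b L ε : ℝ} {u v V : ℝ → ℝ → ℝ}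

-- The pointwise equation gives no bound on `∂ₜu` near `t₀`. The barriers
-- `u t₀ ± (M (t - t₀) + δ x²)` do: at a point of contact the comparison only sees
-- `∂ₓu` and the favourable side of `∂ₓ²u`, both of which are controlled by `u t₀`.
theorem exists_abs_sub_le_mul_sub {t₀ : ℝ} (T : ℝ) (hL : 0 < L) (hε : ε ≠ 0) (ha : 0 ≤ a)
    (h : IsThinFilmSolution a b L ε u v V)
    (hu₀ : ∀ t, 0 < t → ∀ x ∈ Icc (-L) L, 0 ≤ u t x) (ht₀ : 0 < t₀) :
    ∃ M, ∀ t ∈ Icc t₀ T, ∀ x ∈ Icc (-L) L, |u t x - u t₀ x| ≤ M * (t - t₀) := by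
  have hpos (t : ℝ) (ht : t ∈ Icc t₀ T) : 0 < t := ht₀.trans_le ht.1
  have hsub : Icc t₀ T ×ˢ Icc (-L) L ⊆ Ici (0 : ℝ) ×ˢ Icc (-L) L :=
    prod_mono_left fun t ht => (hpos t ht).le
  have hN₀ := h.isNeumann t₀ ht₀
  obtain ⟨K, hK⟩ :=
    (isCompact_Icc.prod isCompact_Icc).exists_bound_of_continuousOn (h.continuousOn.mono hsub)
  obtain ⟨B, hB⟩ := IsResolvent.exists_abs_derivI_le hL hε (h.continuousOn_source.mono hsub)
    fun t ht => h.isResolvent t (hpos t ht)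
  obtain ⟨C₁, hC₁⟩ := isCompact_Icc.exists_bound_of_continuousOn (hN₀.continuousOn_derivI hL)
  obtain ⟨C₂, hC₂⟩ :=
    isCompact_Icc.exists_bound_of_continuousOn (hN₀.continuousOn_derivI_derivI hL)
  refine ⟨|a| * (C₁ + 2 * L) ^ 2 + |b| * ((C₁ + 2 * L) * B + (K + |ε|) * B)
    + a * (K * (C₂ + 2)) + 1, fun t ht x hx => ?_⟩
  refine abs_le_mul_sub_of_isNeumann (w := fun t x => u t x - u t₀ x)
    (w' := fun t x => filmVelocity a b L ε (u t) (V t) x) hL ?_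
    (fun s hs => (h.isNeumann s (ht₀.trans hs.1)).sub hL hN₀)
    (fun s hs y hy => (h.hasDerivAt s (ht₀.trans hs.1) y hy).sub_const _)
    (fun y _ => sub_self _) (fun s hs y hy hslope => ?_) ht hx
  · exact (h.continuousOn.mono hsub).sub
      (hN₀.continuousOn.comp continuousOn_snd fun p hp => hp.2)
  have hs₀ := ht₀.trans hs.1
  have hs' := Ioc_subset_Icc_self hs
  have hy' := Ioo_subset_Icc_self hy
  have huK : |u s y| ≤ K := hK (s, y) ⟨hs', hy'⟩
  have hC₂y : |derivI L (derivI L (u t₀)) y| ≤ C₂ := hC₂ y hy'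
  rw [(h.isNeumann s hs₀).derivI_sub hL hN₀ hy'] at hslope
  rw [(h.isNeumann s hs₀).derivI_derivI_sub hL hN₀ hy']
  have huQ : |derivI L (u s) y| ≤ C₁ + 2 * L := by
    have hC₁y : |derivI L (u t₀) y| ≤ C₁ := hC₁ y hy'
    have := abs_add_le (derivI L (u t₀) y) (derivI L (u s) y - derivI L (u t₀) y)
    rw [add_sub_cancel] at this
    linarith
  obtain ⟨hupper, hlower⟩ := filmVelocity_le_and_neg_le (b := b) (ε := ε) (c := C₂ + 2) hL ha
    (by linarith [(abs_nonneg _).trans hC₂y]) (h.isNeumann s hs₀) (h.isResolvent s hs₀).isNeumann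
    hy' (hu₀ s hs₀ y hy') ((le_abs_self _).trans huK) huQ (hB s hs' y hy').1 (hB s hs' y hy').2
  constructor <;> intro hsecond
  · linarith [hupper (by linarith [(abs_le.1 hC₂y).2])]
  · linarith [hlower (by linarith [(abs_le.1 hC₂y).1])]

theorem exists_hasDerivWithinAt_boltzmannEntropy_le {α t : ℝ} (hL : 0 < L) (hε : 0 < ε)
    (ha : 0 ≤ a) (hb : 0 ≤ b) (hα : 0 < α) (h : IsThinFilmSolution a b L ε u v V)
    (hlow : ∀ t, 0 < t → ∀ x ∈ Icc (-L) L, ε / 2 ≤ u t x) (ht : 0 < t) :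
    ∃ e, HasDerivWithinAt (fun t => boltzmannEntropy L (u t)) e (Ioi t) t ∧
      e ≤ -(a - b * α / 2) * dirichletEnergy L (u t) + b * α⁻¹ / 2 * dirichletEnergy L (v t) := by
  obtain ⟨M, hM⟩ := h.exists_abs_sub_le_mul_sub (t + 1) hL hε.ne' ha
    (fun s hs x hx => by linarith [hlow s hs x hx]) ht
  have hsub : Icc t (t + 1) ×ˢ Icc (-L) L ⊆ Ici (0 : ℝ) ×ˢ Icc (-L) L :=
    prod_mono_left fun s hs => ht.le.trans hs.1
  have hres := h.isResolvent t ht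
  refine ⟨_, hasDerivWithinAt_boltzmannEntropy (half_pos hε) (lt_add_one t)
    (h.continuousOn.mono hsub) (fun s hs => hlow s (ht.trans_le hs.1)) hM (h.hasDerivAt t ht), ?_⟩
  calc ∫ x in Ioo (-L) L, (Real.log (u t x) + 1) * filmVelocity a b L ε (u t) (V t) x
      ≤ -(a - b * α / 2) * dirichletEnergy L (u t) + b * α⁻¹ / 2 * dirichletEnergy L (V t) :=
        setIntegral_log_add_one_mul_filmVelocity_le hL hb hε hα (h.isNeumann t ht)
          hres.isNeumann (hlow t ht)
    _ ≤ -(a - b * α / 2) * dirichletEnergy L (u t) + b * α⁻¹ / 2 * dirichletEnergy L (v t) := by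
        gcongr
        exact hres.dirichletEnergy_le hL (h.isNeumann_source t ht)

end IsThinFilmSolution

namespace IsClassicalSolution

variable {R Rμ L ε : ℝ} {f g F G : ℝ → ℝ → ℝ}

theorem isThinFilmSolution_left (h : IsClassicalSolution R Rμ L ε f g F G) :
    IsThinFilmSolution (1 + R) R L ε f g G where
  continuousOn := h.cont_f
  continuousOn_source := h.cont_g
  isNeumann t ht := ⟨h.reg_f t ht, (h.bc_f t ht).1, (h.bc_f t ht).2⟩
  isNeumann_source t ht := ⟨h.reg_g t ht, (h.bc_g t ht).1, (h.bc_g t ht).2⟩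
  isResolvent := h.res_g
  hasDerivAt := h.pde_f

theorem isThinFilmSolution_right (h : IsClassicalSolution R Rμ L ε f g F G) :
    IsThinFilmSolution Rμ Rμ L ε g f F where
  continuousOn := h.cont_g
  continuousOn_source := h.cont_f
  isNeumann := h.isThinFilmSolution_left.isNeumann_source
  isNeumann_source := h.isThinFilmSolution_left.isNeumann
  isResolvent := h.res_f
  hasDerivAt t ht x hx := (h.pde_g t ht x hx).congr_deriv (add_comm _ _)

-- Young's inequality is weighted by `α` in the first equation and by `α⁻¹` in the second;
-- `α = (1 + 2R) / (2R)` produces the dissipation rates `1 / 2` and `R / (1 + 2R)`.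
theorem exists_hasDerivWithinAt_entropy_le {t : ℝ} (hR : 0 < R) (hRμ : 0 < Rμ) (hL : 0 < L)
    (hε : 0 < ε) (h : IsClassicalSolution R Rμ L ε f g F G)
    (hf : ∀ t, 0 < t → ∀ x ∈ Icc (-L) L, ε / 2 ≤ f t x)
    (hg : ∀ t, 0 < t → ∀ x ∈ Icc (-L) L, ε / 2 ≤ g t x) (ht : 0 < t) :
    ∃ e, HasDerivWithinAt
        (fun t => boltzmannEntropy L (f t) + R / Rμ * boltzmannEntropy L (g t)) e (Ioi t) t ∧
      e ≤ -(1 / 2 * dirichletEnergy L (f t) + R / (1 + 2 * R) * dirichletEnergy L (g t)) := by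
  have hα : 0 < (1 + 2 * R) / (2 * R) := by positivity
  obtain ⟨e, he, hle⟩ := h.isThinFilmSolution_left.exists_hasDerivWithinAt_boltzmannEntropy_le hL
    hε (by linarith) hR.le hα hf ht
  obtain ⟨e', he', hle'⟩ := h.isThinFilmSolution_right.exists_hasDerivWithinAt_boltzmannEntropy_le
    hL hε hRμ.le hRμ.le (inv_pos.2 hα) hg ht
  refine ⟨e + R / Rμ * e', he.add (he'.const_mul _), ?_⟩
  refine (add_le_add hle (mul_le_mul_of_nonneg_left hle' (by positivity))).trans_eq ?_
  field_simp
  ring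

theorem setIntegral_entropy_eq {t : ℝ} (h : IsClassicalSolution R Rμ L ε f g F G) (ht : 0 ≤ t) :
    ∫ x in Ioo (-L) L, (f t x * Real.log (f t x) + R / Rμ * (g t x * Real.log (g t x)))
      = boltzmannEntropy L (f t) + R / Rμ * boltzmannEntropy L (g t) := by
  have hcont {u : ℝ → ℝ → ℝ} (hu : ContinuousOn (uncurry u) (Ici (0 : ℝ) ×ˢ Icc (-L) L)) :
      ContinuousOn (fun x => u t x * Real.log (u t x)) (Icc (-L) L) :=
    Real.continuous_mul_log.comp_continuousOn
      (hu.comp (f := fun x => (t, x)) (by fun_prop) fun x hx => ⟨ht, hx⟩)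
  simpa only [one_mul, boltzmannEntropy] using
    setIntegral_Ioo_const_mul_add_const_mul 1 (R / Rμ) (hcont h.cont_f) (hcont h.cont_g)

theorem setIntegral_dissipation_eq {t : ℝ} (hL : 0 < L)
    (h : IsClassicalSolution R Rμ L ε f g F G) (ht : 0 < t) (c d : ℝ) :
    ∫ x in Ioo (-L) L, (c * derivI L (f t) x ^ 2 + d * derivI L (g t) x ^ 2)
      = c * dirichletEnergy L (f t) + d * dirichletEnergy L (g t) :=
  setIntegral_const_mul_derivI_sq_add hL (h.isThinFilmSolution_left.isNeumann t ht)
    (h.isThinFilmSolution_right.isNeumann t ht) c d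

end IsClassicalSolution

theorem forall_mem_Icc_le_of_forall_mem_Ioo {a b c : ℝ} {u : ℝ → ℝ} (hab : a ≠ b)
    (hu : ContinuousOn u (Icc a b)) (hle : ∀ x ∈ Ioo a b, c ≤ u x) : ∀ x ∈ Icc a b, c ≤ u x := by
  rw [← closure_Ioo hab] at hu ⊢
  exact fun x hx => le_on_closure hle continuousOn_const hu hx

theorem regularized_entropy_inequality_general {R Rμ L ε : ℝ} (hR : 0 < R) (hRμ : 0 < Rμ)
    (hL : 0 < L) (hε : 0 < ε) {f g F G : ℝ → ℝ → ℝ} (hsol : IsClassicalSolution R Rμ L ε f g F G)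
    (hf : ∀ t, 0 < t → ∀ x ∈ Ioo (-L) L, ε / 2 ≤ f t x)
    (hg : ∀ t, 0 < t → ∀ x ∈ Ioo (-L) L, ε / 2 ≤ g t x) {T : ℝ} (hT : 0 ≤ T) :
    IntegrableOn (fun t => ∫ x in Ioo (-L) L,
        ((1 / 2) * (derivI L (f t) x) ^ 2 + R / (1 + 2 * R) * (derivI L (g t) x) ^ 2))
      (Ioc 0 T) ∧
    (∫ x in Ioo (-L) L, (f T x * Real.log (f T x) + R / Rμ * (g T x * Real.log (g T x))))
        + (∫ t in Ioc (0 : ℝ) T, ∫ x in Ioo (-L) L,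
            ((1 / 2) * (derivI L (f t) x) ^ 2 + R / (1 + 2 * R) * (derivI L (g t) x) ^ 2))
      ≤ ∫ x in Ioo (-L) L, (f 0 x * Real.log (f 0 x) + R / Rμ * (g 0 x * Real.log (g 0 x))) := by
  have hLL : -L ≠ L := by linarith
  have hIoc : Ioc 0 T ⊆ Ici 0 := fun t ht => ht.1.le
  have hdiss : EqOn _ _ (Ioc 0 T) := fun t ht =>
    hsol.setIntegral_dissipation_eq hL ht.1 (1 / 2) (R / (1 + 2 * R))
  rw [integrableOn_congr_fun hdiss measurableSet_Ioc, setIntegral_congr_fun measurableSet_Ioc hdiss,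
    hsol.setIntegral_entropy_eq hT, hsol.setIntegral_entropy_eq le_rfl]
  refine integrableOn_and_add_integral_le_of_hasDeriv_right
    (E := fun t => boltzmannEntropy L (f t) + R / Rμ * boltzmannEntropy L (g t)) hT ?_ ?_
    (fun t => ?_) fun t ht => ?_
  · exact ((continuousOn_boltzmannEntropy hL.le hsol.cont_f).add
      ((continuousOn_boltzmannEntropy hL.le hsol.cont_g).const_mul _)).mono fun t ht => ht.1
  · exact ((aestronglyMeasurable_dirichletEnergy hL.le hsol.cont_f).const_mul _).add
      ((aestronglyMeasurable_dirichletEnergy hL.le hsol.cont_g).const_mul _) |>.mono_set hIoc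
  · have := dirichletEnergy_nonneg L (f t)
    have := dirichletEnergy_nonneg L (g t)
    positivity
  · exact hsol.exists_hasDerivWithinAt_entropy_le hR hRμ hL hε
      (fun s hs => forall_mem_Icc_le_of_forall_mem_Ioo hLL (hsol.reg_f s hs).continuousOn (hf s hs))
      (fun s hs => forall_mem_Icc_le_of_forall_mem_Ioo hLL (hsol.reg_g s hs).continuousOn (hg s hs))
      ht.1

/-- **Lemma 3.3**, entropy inequality (3.4): for a nonnegative classical solution of the
regularized system with `f_ε ≥ ε`, `g_ε ≥ ε`,
`H(f_ε(T), g_ε(T)) + ∫₀ᵀ∫ (½|∂ₓf_ε|² + (R/(1+2R))|∂ₓg_ε|²) dx dt ≤ H(f_ε(0), g_ε(0))`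
where `H(f,g) = ∫ (f ln f + (R/Rμ) g ln g) dx`. -/
theorem regularized_entropy_inequality
    (R Rμ L ε : ℝ) (hR : 0 < R) (hRμ : 0 < Rμ) (hL : 0 < L) (hε : 0 < ε) (hε1 : ε < 1)
    (f g F G : ℝ → ℝ → ℝ)
    (hsol : IsClassicalSolution R Rμ L ε f g F G)
    (hf : ∀ t : ℝ, 0 ≤ t → ∀ x ∈ Icc (-L) L, 0 ≤ f t x)
    (hg : ∀ t : ℝ, 0 ≤ t → ∀ x ∈ Icc (-L) L, 0 ≤ g t x)
    (hfε : ∀ t : ℝ, 0 < t → ∀ x ∈ Ioo (-L) L, ε ≤ f t x)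
    (hgε : ∀ t : ℝ, 0 < t → ∀ x ∈ Ioo (-L) L, ε ≤ g t x) :
    ∀ T : ℝ, 0 < T →
      (∫ x in Ioo (-L) L,
          (f T x * Real.log (f T x) + R / Rμ * (g T x * Real.log (g T x))))
        + (∫ t in Ioc (0:ℝ) T, ∫ x in Ioo (-L) L,
            ((1 / 2) * (derivI L (f t) x) ^ 2
              + R / (1 + 2 * R) * (derivI L (g t) x) ^ 2))
      ≤ ∫ x in Ioo (-L) L,
          (f 0 x * Real.log (f 0 x) + R / Rμ * (g 0 x * Real.log (g 0 x))) := by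
  intro T hT
  exact (regularized_entropy_inequality_general hR hRμ hL hε hsol
    (fun t ht x hx => (half_le_self hε.le).trans (hfε t ht x hx))
    (fun t ht x hx => (half_le_self hε.le).trans (hgε t ht x hx)) hT.le).2

end
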